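/- Let 1 < p < 3/2, Ω ⊂ ℝ³ open, Ω' ⋐ Ω, and let X ∈ L^p(Ω, ℝ³). Suppose there is ε₀ > 0 such that: (monotonicity) for each x ∈ Ω the function r ↦ r^{2p-3} ∫_{B_r(x)} |X|^p is nondecreasing; and (ε-regularity) a point x₀ lies in the regular set of X whenever r^{2p-3} ∫_{B_r(x₀)} |X|^p ≤ ε₀ for some r with B_r(x₀) ⊂ Ω. Then the singular set S = sing(X) ∩ Ω' satisfies H^{3-2p}(S) = 0. -/

import Mathlib

/-!
At a singular point the `ε`-regularity hypothesis fails on every ball contained in `Ω`, so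
the measure `|X|^p dx` gives mass at least `ε₀ δ^s`, `s = 3 - 2p`, to each `δ`-ball centred on the
singular set, for all small `δ`. By the Vitali covering lemma the singular set is covered by balls
of radius `5δ` whose concentric `δ`-balls are disjoint; if `U_δ` is the union of the latter,
then `∑ δ^s ≤ ε₀⁻¹ ∫_{U_δ} |X|^p`. Bounding the right side by the total integral shows that
`U_δ` has volume at most a constant times `δ^{3-s}`, which tends to `0` with `δ`. Absolute
continuity of the integral then gives `∫_{U_δ} |X|^p → 0`, so that `∑ δ^s → 0` and the
`s`-dimensional Hausdorff measure vanishes.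

The measure-theoretic part is `hausdorffMeasure_eq_zero_of_density`, valid in any finite-dimensional
normed space, with one scale treated in `exists_vitali_cover`.
-/

open MeasureTheory Metric

noncomputable section

local notation "E3" => EuclideanSpace ℝ (Fin 3)

/-- The regular set of a vector field: points near which it is `C¹`. -/
def regSet (X : E3 → E3) : Set E3 :=
  {x | ∃ U : Set E3, IsOpen U ∧ x ∈ U ∧ ContDiffOn ℝ 1 X U}

open Filter Topology Set ENNReal Module

lemma ediam_le_aux {E : Type*} [PseudoMetricSpace E] (x : E) {δ : ℝ} (hδ : 0 ≤ δ) :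
    ediam (closedBall x (5 * δ)) ≤ 10 * ENNReal.ofReal δ := by
  rw [← Metric.closedEBall_ofReal (by positivity)]
  refine ediam_closedEBall_le.trans ?_
  rw [ENNReal.ofReal_mul (by norm_num), ← mul_assoc]
  norm_num

/-- The covering at a fixed scale `δ`: if every `δ`-ball centred on `S` has `g`-mass at least
`c δ^s`, then `S` is covered by countably many balls of radius `5δ`, and the union `U` of the
concentric `δ`-balls controls both the sum of `δ^s` (through the mass of `U`) and its own volume. -/
lemma exists_vitali_cover {E : Type*} [NormedAddCommGroup E] [NormedSpace ℝ E]
    [FiniteDimensional ℝ E] [MeasurableSpace E] [BorelSpace E] (μ : Measure E)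
    [μ.IsAddHaarMeasure] {g : E → ℝ≥0∞} {c : ℝ≥0∞} {s δ : ℝ} (hδ : 0 < δ) {S : Set E}
    (hS : ∀ x ∈ S, c * ENNReal.ofReal δ ^ s ≤ ∫⁻ y in closedBall x δ, g y ∂μ) :
    ∃ (u U : Set E), u.Countable ∧ (S ⊆ ⋃ x : u, closedBall (x : E) (5 * δ)) ∧
      c * ∑' _ : u, ENNReal.ofReal δ ^ s ≤ ∫⁻ y in U, g y ∂μ ∧
      c * μ U ≤ ENNReal.ofReal δ ^ ((finrank ℝ E : ℝ) - s) * μ (ball 0 1) * ∫⁻ y, g y ∂μ := by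
  obtain ⟨u, huS, hdisj, hcov⟩ := Vitali.exists_disjoint_subfamily_covering_enlargement_closedBall
    S (fun x : E => x) (fun _ => δ) δ (fun _ _ => le_rfl) 5 (by norm_num)
  have hcount : u.Countable := hdisj.countable_of_nonempty_interior fun x _ =>
    (nonempty_ball.2 hδ).mono ball_subset_interior_closedBall
  have hmass : c * ∑' _ : u, ENNReal.ofReal δ ^ s ≤
      ∫⁻ y in ⋃ x ∈ u, closedBall x δ, g y ∂μ := by
    rw [lintegral_biUnion hcount (fun _ _ => measurableSet_closedBall) hdisj, ← ENNReal.tsum_mul_left]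
    exact ENNReal.tsum_le_tsum fun x => hS x (huS x.2)
  refine ⟨u, ⋃ x ∈ u, closedBall x δ, hcount, fun x hx => ?_, hmass, ?_⟩
  · obtain ⟨y, hy, hxy⟩ := hcov x hx
    exact mem_iUnion.2 ⟨⟨y, hy⟩, hxy (mem_closedBall_self hδ.le)⟩
  · have hδ0 : ENNReal.ofReal δ ≠ 0 := by simpa using hδ
    -- each `δ`-ball has volume `δ^n |B₁| = δ^(n-s) |B₁| δ^s`
    have hvol : ∀ x : u, μ (closedBall (x : E) δ) =
        ENNReal.ofReal δ ^ ((finrank ℝ E : ℝ) - s) * μ (ball 0 1) * ENNReal.ofReal δ ^ s := by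
      intro x
      rw [Measure.addHaar_closedBall μ _ hδ.le, mul_right_comm,
        ← ENNReal.rpow_add _ _ hδ0 ENNReal.ofReal_ne_top, sub_add_cancel,
        ENNReal.rpow_natCast, ENNReal.ofReal_pow hδ.le]
    rw [measure_biUnion hcount hdisj fun _ _ => measurableSet_closedBall, tsum_congr hvol,
      ENNReal.tsum_mul_left, mul_left_comm]
    gcongr
    exact hmass.trans (setLIntegral_le_lintegral _ _)

/-- If `g` is integrable and its mass on small balls centred on `S` is bounded below by `c r^s`
with `s` less than the dimension, then `S` is `H^s`-null. -/
lemma hausdorffMeasure_eq_zero_of_density {E : Type*} [NormedAddCommGroup E] [NormedSpace ℝ E]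
    [FiniteDimensional ℝ E] [MeasurableSpace E] [BorelSpace E] (μ : Measure E)
    [μ.IsAddHaarMeasure] {g : E → ℝ≥0∞} (hg : ∫⁻ y, g y ∂μ ≠ ∞) {c : ℝ≥0∞} (hc : c ≠ 0)
    (hc' : c ≠ ∞) {s r₀ : ℝ} (hs : 0 ≤ s) (hsn : s < finrank ℝ E) (hr₀ : 0 < r₀) {S : Set E}
    (hS : ∀ x ∈ S, ∀ r, 0 < r → r ≤ r₀ →
      c * ENNReal.ofReal r ^ s ≤ ∫⁻ y in closedBall x r, g y ∂μ) :
    μH[s] S = 0 := by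
  set δ : ℕ → ℝ := fun n => r₀ / (n + 1) with hδdef
  have hδ : ∀ n, 0 < δ n := fun n => by positivity
  have hδr : ∀ n, δ n ≤ r₀ := fun n =>
    div_le_self hr₀.le (by linarith [(Nat.cast_nonneg n : (0 : ℝ) ≤ n)])
  have hδ_lim : Tendsto (fun n => ENNReal.ofReal (δ n)) atTop (𝓝 0) := by
    have h : Tendsto δ atTop (𝓝 0) := by
      simpa [hδdef, div_eq_mul_inv] using
        (tendsto_one_div_add_atTop_nhds_zero_nat (𝕜 := ℝ)).const_mul r₀
    simpa using ENNReal.tendsto_ofReal h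
  choose u U hcount hcov hmass hvol using fun n =>
    exists_vitali_cover μ (hδ n) (s := s) fun x hx => hS x hx (δ n) (hδ n) (hδr n)
  have hU : Tendsto (μ ∘ U) atTop (𝓝 0) := by
    have hpow : Tendsto (fun n => ENNReal.ofReal (δ n) ^ ((finrank ℝ E : ℝ) - s))
        atTop (𝓝 0) := by
      have h := ((ENNReal.continuous_rpow_const (y := (finrank ℝ E : ℝ) - s)).tendsto 0).comp hδ_lim
      rwa [ENNReal.zero_rpow_of_pos (sub_pos.2 hsn)] at h
    have hK : c⁻¹ * (μ (ball 0 1) * ∫⁻ y, g y ∂μ) ≠ ∞ :=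
      ENNReal.mul_ne_top (ENNReal.inv_ne_top.2 hc) (ENNReal.mul_ne_top measure_ball_lt_top.ne hg)
    have h := ENNReal.Tendsto.const_mul hpow (Or.inr hK)
    rw [mul_zero] at h
    refine tendsto_of_tendsto_of_tendsto_of_le_of_le tendsto_const_nhds h
      (fun _ => zero_le) fun n => ?_
    calc μ (U n) = c⁻¹ * (c * μ (U n)) := by
          rw [← mul_assoc, ENNReal.inv_mul_cancel hc hc', one_mul]
      _ ≤ c⁻¹ * (ENNReal.ofReal (δ n) ^ ((finrank ℝ E : ℝ) - s) * μ (ball 0 1) *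
            ∫⁻ y, g y ∂μ) := by
          exact mul_le_mul_right (hvol n) _
      _ = _ := by ring
  have hsum : Tendsto (fun n => ∑' x : u n, ediam (closedBall (x : E) (5 * δ n)) ^ s)
      atTop (𝓝 0) := by
    have hK : (10 : ℝ≥0∞) ^ s * c⁻¹ ≠ ∞ :=
      ENNReal.mul_ne_top (ENNReal.rpow_ne_top_of_nonneg hs (by simp)) (ENNReal.inv_ne_top.2 hc)
    have h := ENNReal.Tendsto.const_mul (tendsto_setLIntegral_zero hg hU) (Or.inr hK)
    rw [mul_zero] at h
    refine tendsto_of_tendsto_of_tendsto_of_le_of_le tendsto_const_nhds h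
      (fun _ => zero_le) fun n => ?_
    calc ∑' x : u n, ediam (closedBall (x : E) (5 * δ n)) ^ s
        ≤ ∑' _ : u n, (10 : ℝ≥0∞) ^ s * ENNReal.ofReal (δ n) ^ s := by
          refine ENNReal.tsum_le_tsum fun x => ?_
          rw [← ENNReal.mul_rpow_of_nonneg _ _ hs]
          exact ENNReal.rpow_le_rpow (ediam_le_aux _ (hδ n).le) hs
      _ = (10 : ℝ≥0∞) ^ s * c⁻¹ * (c * ∑' _ : u n, ENNReal.ofReal (δ n) ^ s) := by
          rw [ENNReal.tsum_mul_left, mul_assoc, ← mul_assoc c⁻¹,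
            ENNReal.inv_mul_cancel hc hc', one_mul]
      _ ≤ _ := by gcongr; exact hmass n
  have := fun n => (hcount n).to_subtype
  have hr : Tendsto (fun n => 10 * ENNReal.ofReal (δ n)) atTop (𝓝 0) := by
    simpa using ENNReal.Tendsto.const_mul (a := 10) hδ_lim (Or.inr (by simp))
  refine le_antisymm ?_ zero_le
  calc μH[s] S ≤ liminf (fun n => ∑' x : u n, ediam (closedBall (x : E) (5 * δ n)) ^ s) atTop :=
        Measure.hausdorffMeasure_le_liminf_tsum s S _ hr
          (fun n (x : u n) => closedBall (x : E) (5 * δ n))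
          (Eventually.of_forall fun n x => ediam_le_aux _ (hδ n).le) (Eventually.of_forall hcov)
    _ = 0 := hsum.liminf_eq

/-- vanishing `H^{3-2p}`-measure of the singular set. Let
`1 < p < 3/2`, `Ω ⊂ ℝ³` open, `Ω' ⋐ Ω`, `X ∈ L^p(Ω, ℝ³)`. Assume monotonicity
of the rescaled energy `r ↦ r^{2p-3} ∫_{B_r(x)} |X|^p`, and ε-regularity: `x₀`
is a regular point of `X` as soon as `r^{2p-3} ∫_{B_r(x₀)} |X|^p ≤ ε₀` for some
admissible `r`. Then the singular set `S = sing(X) ∩ Ω'` satisfies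
`H^{3-2p}(S) = 0`. -/
theorem stmt_6 (p ε₀ : ℝ) (hp1 : 1 < p) (hp2 : p < 3/2) (hε₀ : 0 < ε₀)
    (Ω Ω' : Set E3) (hΩ : IsOpen Ω) (hΩ'c : IsCompact (closure Ω')) (hΩ' : closure Ω' ⊆ Ω)
    (X : E3 → E3)
    (hXint : IntegrableOn (fun x => ‖X x‖ ^ p) Ω)
    -- monotonicity of the rescaled energy
    (hmono : ∀ x ∈ Ω, ∀ r₁ r₂ : ℝ, 0 < r₁ → r₁ ≤ r₂ → ball x r₂ ⊆ Ω →
      r₁ ^ (2*p - 3) * ∫ y in ball x r₁, ‖X y‖ ^ p ≤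
        r₂ ^ (2*p - 3) * ∫ y in ball x r₂, ‖X y‖ ^ p)
    -- ε-regularity
    (hereg : ∀ x₀ : E3, ∀ r : ℝ, 0 < r → ball x₀ r ⊆ Ω →
      r ^ (2*p - 3) * ∫ y in ball x₀ r, ‖X y‖ ^ p ≤ ε₀ → x₀ ∈ regSet X) :
    μH[3 - 2*p] ((Ω \ regSet X) ∩ Ω') = 0 := by
  obtain ⟨r₀, hr₀, hthick⟩ := hΩ'c.exists_cthickening_subset_open hΩ hΩ'
  have hnn : ∀ y, 0 ≤ ‖X y‖ ^ p := fun y => Real.rpow_nonneg (norm_nonneg _) _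
  refine hausdorffMeasure_eq_zero_of_density volume
    (g := Ω.indicator fun y => ENNReal.ofReal (‖X y‖ ^ p)) (c := ENNReal.ofReal ε₀) ?_
    (by simpa using hε₀) ENNReal.ofReal_ne_top (by linarith) ?_ hr₀ ?_
  · rw [lintegral_indicator hΩ.measurableSet,
      ← ofReal_integral_eq_lintegral_ofReal hXint (Eventually.of_forall hnn)]
    exact ENNReal.ofReal_ne_top
  · simp only [finrank_euclideanSpace, Fintype.card_fin]
    push_cast
    linarith
  · rintro x ⟨⟨_, hxsing⟩, hxΩ'⟩ r hr hrr₀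
    have hball : ball x r ⊆ Ω := ball_subset_closedBall.trans <|
      (closedBall_subset_closedBall hrr₀).trans <|
        (closedBall_subset_cthickening (subset_closure hxΩ') r₀).trans hthick
    have hlow : ε₀ * r ^ (3 - 2 * p) ≤ ∫ y in ball x r, ‖X y‖ ^ p := by
      have h : ε₀ < r ^ (2 * p - 3) * ∫ y in ball x r, ‖X y‖ ^ p :=
        not_le.1 fun h => hxsing (hereg x r hr hball h)
      have hcancel : r ^ (2 * p - 3) * r ^ (3 - 2 * p) = 1 := by
        rw [← Real.rpow_add hr]; simp
      calc ε₀ * r ^ (3 - 2 * p)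
          ≤ (r ^ (2 * p - 3) * ∫ y in ball x r, ‖X y‖ ^ p) * r ^ (3 - 2 * p) := by gcongr
        _ = ∫ y in ball x r, ‖X y‖ ^ p := by rw [mul_right_comm, hcancel, one_mul]
    calc ENNReal.ofReal ε₀ * ENNReal.ofReal r ^ (3 - 2 * p)
        = ENNReal.ofReal (ε₀ * r ^ (3 - 2 * p)) := by
          rw [ENNReal.ofReal_mul hε₀.le, ENNReal.ofReal_rpow_of_pos hr]
      _ ≤ ENNReal.ofReal (∫ y in ball x r, ‖X y‖ ^ p) := ENNReal.ofReal_le_ofReal hlow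
      _ = ∫⁻ y in ball x r, ENNReal.ofReal (‖X y‖ ^ p) :=
          ofReal_integral_eq_lintegral_ofReal (hXint.mono_set hball) (Eventually.of_forall hnn)
      _ = ∫⁻ y in ball x r, Ω.indicator (fun y => ENNReal.ofReal (‖X y‖ ^ p)) y :=
          setLIntegral_congr_fun measurableSet_ball fun y hy =>
            (indicator_of_mem (hball hy) fun y => ENNReal.ofReal (‖X y‖ ^ p)).symm
      _ ≤ _ := lintegral_mono_set ball_subset_closedBall
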